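/- Let n = p1⋯pk be a positive squarefree integer with all prime factors p_i ≡ 1 (mod 4), let K = ℚ(√−n) with ideal class group A, and let R be the Rédei matrix of K. Let d | n, r ∈ {0,1}, assume 2^r·d ∈ N(K^×) and 2^r·d ∉ {1, n}, and let (a, b, c) be a primitive positive integer solution of 2^r·z² = d·x² + (n/d)·y². Let 𝔡 be the ideal of O_K given by the product of the ramified prime ideals above the primes dividing d, multiplied by the r-th power of the ramified prime ideal above 2. Then the ideal class [𝔡] lies in 4A if and only if C lies in the column image of R, where C = ([c/p_1], …, [c/p_k])^T ∈ F_2^k. -/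

import Mathlib

open NumberField
open scoped nonZeroDivisors

open Classical in
/-- The additive Legendre symbol `[a/p] ∈ F₂`: `0` if `a` is a square mod `p`, `1` otherwise. -/
noncomputable def aLeg (a : ℤ) (p : ℕ) : ZMod 2 :=
  if IsSquare ((a : ZMod p)) then 0 else 1

/-- The Rédei matrix of `ℚ(√−n)`, `n = p₁⋯p_k` with all `p_i ≡ 1 (mod 4)` (so `D = −4n`):
the `k × (k+1)` matrix over `F₂` with `r_{ij} = [p_j/p_i]` for `i ≠ j`,
`r_{ii} = [(D/p_i)/p_i]`, and last column `[2/p_i]`. -/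
noncomputable def redeiOfN (n k : ℕ) (p : Fin k → ℕ) :
    Matrix (Fin k) (Fin k ⊕ Unit) (ZMod 2) :=
  Matrix.of fun i j =>
    Sum.elim
      (fun j' : Fin k =>
        if i = j' then aLeg ((-4 * (n : ℤ)) / (p i : ℤ)) (p i) else aLeg (p j') (p i))
      (fun _ => aLeg 2 (p i)) j

/-!
The element `α = da + bω` has norm `2 ^ r * d * c ^ 2` and trace `2da`. Since `c` is prime to the
trace, `(α) = 𝔡 B²` for an ideal `B` of norm `c`, so `[𝔡] = [B]⁻²`.

Sending an ideal `I` to the norm residue symbols of `N I` at the primes `p i` defines the genus map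
`G : A → F₂^k`; it is onto by Dirichlet's theorem and reciprocity. The classes of the `k + 1`
ramified primes generate `A[2]` and satisfy a nontrivial relation, so `#A[2] ≤ 2 ^ k`, which forces
`ker G = 2A`. Hence `[B]⁻²` is a fourth power iff `[B]` lies in `A[2] + 2A`, iff `G [B]` lies in
`G (A[2])`. Here `G [B] = C`, and the values of `G` on the ramified primes are the columns of the
Rédei matrix.
-/

section Ideals

open Ideal

variable {R : Type*} [CommRing R]

lemma span_pair_sq_eq_span_singleton {q α s e : R} (hα : α ^ 2 = q * (s * α + e))
    (hqe : IsCoprime q e) : span {q, α} ^ 2 = span {q} := by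
  obtain ⟨u, v, huv⟩ := hqe
  rw [sq, span_pair_mul_span_pair]
  apply le_antisymm
  · simp only [span_le, Set.insert_subset_iff, Set.singleton_subset_iff, SetLike.mem_coe,
      mem_span_singleton]
    exact ⟨⟨q, rfl⟩, ⟨α, rfl⟩, ⟨α, mul_comm _ _⟩, ⟨_, by rw [← sq, hα]⟩⟩
  · have hmem : u * (q * q) + v * (α * α) - v * s * (q * α) ∈
        span {q * q, q * α, α * q, α * α} :=
      sub_mem (add_mem (mul_mem_left _ _ (subset_span (by simp)))
        (mul_mem_left _ _ (subset_span (by simp)))) (mul_mem_left _ _ (subset_span (by simp)))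
    rw [span_singleton_le_iff_mem]
    convert hmem using 1
    linear_combination -q * huv - v * hα

lemma span_pair_sq_eq_span_pair {c α s t : R} (hα : α ^ 2 = t * α - s * c ^ 2)
    (hct : IsCoprime c t) : span {c, α} ^ 2 = span {c ^ 2, α} := by
  obtain ⟨u, v, huv⟩ := hct
  rw [sq, span_pair_mul_span_pair]
  apply le_antisymm
  · simp only [span_le, Set.insert_subset_iff, Set.singleton_subset_iff, SetLike.mem_coe,
      mem_span_pair]
    exact ⟨⟨1, 0, by ring⟩, ⟨0, c, by ring⟩, ⟨0, c, by ring⟩, ⟨0, α, by ring⟩⟩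
  · have hmem : u * (c * α) + v * (α * α) + v * s * (c * c) ∈
        span {c * c, c * α, α * c, α * α} :=
      add_mem (add_mem (mul_mem_left _ _ (subset_span (by simp)))
        (mul_mem_left _ _ (subset_span (by simp)))) (mul_mem_left _ _ (subset_span (by simp)))
    rw [span_le, Set.insert_subset_iff, Set.singleton_subset_iff]
    refine ⟨subset_span (by simp [sq]), ?_⟩
    rw [SetLike.mem_coe]
    convert hmem using 1
    linear_combination -α * huv - v * hα

lemma eq_span_pair_of_mul_eq_span_singleton {D E : Ideal R} {M m α : R} (hD : D ^ 2 = span {M})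
    (hDE : D * E = span {α}) (hm : m ∈ E) (hMm : IsCoprime M m) : E = span {m, α} := by
  obtain ⟨u, v, huv⟩ := hMm
  have hαE : α ∈ E := (hDE.ge.trans Ideal.mul_le_right) (mem_span_singleton_self α)
  have hME : span {M} * E ≤ span {α} := by
    rw [← hD, sq, mul_assoc, hDE]
    exact Ideal.mul_le_right
  apply le_antisymm
  · intro x hx
    have hMx : M * x ∈ span {m, α} :=
      span_mono (by simp) (hME (mul_mem_mul (mem_span_singleton_self M) hx))
    have hmx : m * x ∈ span {m, α} := mul_mem_right _ _ (subset_span (by simp))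
    convert add_mem (mul_mem_left _ u hMx) (mul_mem_left _ v hmx) using 1
    linear_combination -x * huv
  · rw [span_le, Set.insert_subset_iff, Set.singleton_subset_iff]
    exact ⟨hm, hαE⟩

lemma exists_eq_mul_of_coe_dvd {I J : (Ideal R)⁰} (h : (I : Ideal R) ∣ J) :
    ∃ J' : (Ideal R)⁰, J = I * J' := by
  obtain ⟨J', hJ'⟩ := h
  exact ⟨⟨J', (mul_mem_nonZeroDivisors.1 (hJ' ▸ J.2)).2⟩, Subtype.ext hJ'⟩

lemma natCast_dvd_of_dvd_natCast {q m : ℕ} (hq : q.Prime) (hu : ¬ IsUnit (q : R))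
    (h : (q : R) ∣ m) : q ∣ m := by
  by_contra hqm
  exact hu (((hq.coprime_iff_not_dvd.2 hqm).cast (R := R)).isUnit_of_dvd' dvd_rfl h)

lemma span_intCast_eq_span_natAbs [IsDomain R] (z : ℤ) : span {(z : R)} = span {(z.natAbs : R)} :=
  span_singleton_eq_span_singleton.2 <| by
    simpa using (Int.associated_natAbs z).map (Int.castRingHom R)

end Ideals

section Groups

/-- The homomorphism `F₂^ι → A`, `Y ↦ ∏ g j ^ Y j`, attached to a family `g` of elements of
order dividing `2`; the vector group is written multiplicatively. -/
def involutionHom {A ι : Type*} [CommGroup A] [Fintype ι] (g : ι → A) (hg : ∀ j, g j ^ 2 = 1) :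
    Multiplicative (ι → ZMod 2) →* A where
  toFun Y := ∏ j, g j ^ (Y.toAdd j).val
  map_one' := by simp
  map_mul' Y Z := by
    simp only [← Finset.prod_mul_distrib, ← pow_add, toAdd_mul, Pi.add_apply, ZMod.val_add]
    exact Finset.prod_congr rfl fun j _ => (pow_eq_pow_mod _ (hg j)).symm

section

variable {A ι : Type*} [CommGroup A] [Fintype ι] {g : ι → A} (hg : ∀ j, g j ^ 2 = 1)
include hg

lemma mem_range_involutionHom (j : ι) : g j ∈ (involutionHom g hg).range := by
  classical
  refine ⟨.ofAdd (Pi.single j 1), ?_⟩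
  change ∏ i, g i ^ ((Pi.single j 1 : ι → ZMod 2) i).val = g j
  rw [Finset.prod_eq_single j (fun i _ hij => by simp [hij]) (by simp)]
  simp [ZMod.val_one]

lemma toAdd_map_involutionHom {κ : Type*} (φ : A →* Multiplicative (κ → ZMod 2)) (Y : ι → ZMod 2) :
    (φ (involutionHom g hg (.ofAdd Y))).toAdd =
      (Matrix.of fun i j => (φ (g j)).toAdd i).mulVec Y := by
  change (φ (∏ j, g j ^ (Y j).val)).toAdd = _
  ext i
  simp only [map_prod, map_pow, toAdd_prod, toAdd_pow, Finset.sum_apply, Pi.smul_apply]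
  simp only [nsmul_eq_mul, ZMod.natCast_zmod_val, Matrix.mulVec, dotProduct, Matrix.of_apply,
    mul_comm]

lemma range_involutionHom_le :
    (involutionHom g hg).range ≤ (powMonoidHom 2 : A →* A).ker := by
  rintro _ ⟨Y, rfl⟩
  change (∏ j, g j ^ (Y.toAdd j).val) ^ 2 = 1
  simp_rw [← Finset.prod_pow, ← pow_mul, mul_comm _ 2, pow_mul, hg, one_pow, Finset.prod_const_one]

end

variable {A M W : Type*} [CommGroup A] [CommGroup M] [Group W]

lemma ker_eq_range_powMonoidHom [Finite A] [Finite M] {m : ℕ} {G : A →* M}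
    (hG : Function.Surjective G) (hM : ∀ x : M, x ^ m = 1)
    (hcard : Nat.card (powMonoidHom m : A →* A).ker ≤ Nat.card M) :
    G.ker = (powMonoidHom m : A →* A).range := by
  have hle : (powMonoidHom m : A →* A).range ≤ G.ker := by
    rintro _ ⟨x, rfl⟩
    simp [MonoidHom.mem_ker, hM]
  refine (Subgroup.eq_of_le_of_card_ge hle ?_).symm
  have h₁ := (powMonoidHom m : A →* A).ker.card_mul_index
  have h₂ := G.ker.card_mul_index
  rw [Subgroup.index_ker] at h₁ h₂
  rw [MonoidHom.range_eq_top.2 hG, Subgroup.card_top] at h₂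
  have : 0 < Nat.card M := Nat.card_pos
  nlinarith

lemma two_mul_card_range_le [Finite W] {f : W →* A} (hf : ¬ Function.Injective f) :
    2 * Nat.card f.range ≤ Nat.card W := by
  have hker : f.ker ≠ ⊥ := fun h => hf ((MonoidHom.ker_eq_bot_iff f).1 h)
  rw [← f.ker.card_mul_index, Subgroup.index_ker]
  exact Nat.mul_le_mul_right _ ((Subgroup.one_lt_card_iff_ne_bot _).2 hker)

lemma exists_eq_pow_four_iff {G : A →* M} {f : W →* A}
    (hG : G.ker = (powMonoidHom 2 : A →* A).range) (hf : f.range = (powMonoidHom 2 : A →* A).ker)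
    {D B : A} (hDB : D * B ^ 2 = 1) : (∃ s, D = s ^ 4) ↔ ∃ w, G (f w) = G B := by
  constructor
  · rintro ⟨s, rfl⟩
    have hsB : s ^ 2 * B ∈ f.range := by
      rw [hf, MonoidHom.mem_ker, powMonoidHom_apply, mul_pow, ← pow_mul, hDB]
    obtain ⟨w, hw⟩ := hsB
    have hs : s ^ 2 ∈ G.ker := hG ▸ ⟨s, rfl⟩
    exact ⟨w, by rw [hw, map_mul, MonoidHom.mem_ker.1 hs, one_mul]⟩
  · rintro ⟨w, hw⟩
    have hwB : f w * B⁻¹ ∈ G.ker := by simp [MonoidHom.mem_ker, hw]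
    rw [hG] at hwB
    obtain ⟨s, hs⟩ := hwB
    have hfw : f w ^ 2 = 1 := by
      have : f w ∈ f.range := ⟨w, rfl⟩
      rwa [hf] at this
    refine ⟨s, ?_⟩
    rw [powMonoidHom_apply] at hs
    rw [eq_inv_of_mul_eq_one_left hDB, show s ^ 4 = (s ^ 2) ^ 2 by rw [← pow_mul], hs, mul_pow, hfw,
      one_mul, inv_pow]

end Groups

section ClassGroup

variable {R : Type*} [CommRing R] [IsDedekindDomain R]

lemma span_singleton_mem_nonZeroDivisors {x : R} (hx : x ≠ 0) : Ideal.span {x} ∈ (Ideal R)⁰ := by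
  simpa [mem_nonZeroDivisors_iff_ne_zero, Ideal.span_singleton_eq_bot] using hx

lemma exists_hom_classGroup {M : Type*} [CommGroup M] (f : (Ideal R)⁰ →* M)
    (hf : ∀ (x : R) (hx : Ideal.span {x} ∈ (Ideal R)⁰), f ⟨Ideal.span {x}, hx⟩ = 1) :
    ∃ G : ClassGroup R →* M, ∀ I, G (ClassGroup.mk0 I) = f I := by
  have hker : Con.ker (ClassGroup.mk0 (R := R)) ≤ Con.ker f := by
    intro I J hIJ
    obtain ⟨x, y, hx, hy, h⟩ := ClassGroup.mk0_eq_mk0_iff.1 hIJ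
    have hmem {z : R} (hz : z ≠ 0) := span_singleton_mem_nonZeroDivisors hz
    have := congrArg f (Subtype.ext h : (⟨_, hmem hx⟩ : (Ideal R)⁰) * I = ⟨_, hmem hy⟩ * J)
    simpa [hf] using this
  let e := Con.quotientKerEquivOfSurjective _ (ClassGroup.mk0_surjective (R := R))
  refine ⟨((Con.ker _).lift f hker).comp e.symm.toMonoidHom, fun I => ?_⟩
  have : e.symm (ClassGroup.mk0 I) = (I : (Con.ker (ClassGroup.mk0 (R := R))).Quotient) :=
    e.symm_apply_eq.2 rfl
  simp [this]

lemma exists_eq_mul_of_sq_eq_sq_mul {J Q : (Ideal R)⁰} {A : Ideal R}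
    (hJ : (J : Ideal R) ^ 2 = Q ^ 2 * A) :
    ∃ J' : (Ideal R)⁰, J = Q * J' ∧ (J' : Ideal R) ^ 2 = A := by
  obtain ⟨J', rfl⟩ := exists_eq_mul_of_coe_dvd
    ((UniqueFactorizationMonoid.pow_dvd_pow_iff_dvd two_ne_zero).1 ⟨A, hJ⟩)
  refine ⟨J', rfl, mul_left_cancel₀ (pow_ne_zero 2 (nonZeroDivisors.coe_ne_zero Q)) ?_⟩
  rw [← hJ, Submonoid.coe_mul, mul_pow]

lemma exists_eq_mul_of_sq_eq_mul {J I : (Ideal R)⁰} {A : Ideal R} (hI : (I : Ideal R).IsRadical)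
    (hJ : (J : Ideal R) ^ 2 = I * A) :
    ∃ J' : (Ideal R)⁰, J = I * J' ∧ I * (J' : Ideal R) ^ 2 = A := by
  have hJI : (J : Ideal R) ≤ I := fun x hx =>
    hI ⟨2, (hJ.le.trans Ideal.mul_le_left) (Ideal.pow_mem_pow hx 2)⟩
  obtain ⟨J', rfl⟩ := exists_eq_mul_of_coe_dvd (Ideal.dvd_iff_le.2 hJI)
  refine ⟨J', rfl, mul_left_cancel₀ (nonZeroDivisors.coe_ne_zero I) ?_⟩
  rw [← hJ, Submonoid.coe_mul, mul_pow, sq (I : Ideal R), mul_assoc]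

lemma mk0_span_singleton {x : R} (hx : Ideal.span {x} ∈ (Ideal R)⁰) :
    ClassGroup.mk0 ⟨Ideal.span {x}, hx⟩ = 1 :=
  (ClassGroup.mk0_eq_one_iff hx).2 ⟨x, rfl⟩

lemma mk0_sq_eq_one {I : (Ideal R)⁰} {x : R} (h : (I : Ideal R) ^ 2 = Ideal.span {x}) :
    ClassGroup.mk0 I ^ 2 = 1 := by
  rw [← map_pow, ClassGroup.mk0_eq_one_iff]
  exact ⟨x, h⟩

lemma mk0_mem_of_sq_eq_span_natCast {H : Subgroup (ClassGroup R)}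
    (hH : ∀ q : ℕ, q.Prime → (Ideal.span {(q : R)}).IsRadical ∨
      ∃ Q : (Ideal R)⁰, (Q : Ideal R) ^ 2 = Ideal.span {(q : R)} ∧ ClassGroup.mk0 Q ∈ H)
    (m : ℕ) (J : (Ideal R)⁰) (hJ : (J : Ideal R) ^ 2 = Ideal.span {(m : R)}) :
    ClassGroup.mk0 J ∈ H := by
  induction m using Nat.strong_induction_on generalizing J with
  | _ m ih =>
  have hm : (m : R) ≠ 0 := fun h => pow_ne_zero 2 (nonZeroDivisors.coe_ne_zero J) <| by
    rw [hJ, h, Ideal.span_singleton_zero, Ideal.zero_eq_bot]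
  rcases eq_or_ne m 1 with rfl | hm1
  · have hJ1 : J = 1 := Subtype.ext <| by simpa [← Ideal.one_eq_top] using hJ
    rw [hJ1, map_one]
    exact H.one_mem
  obtain ⟨q, hq, m, rfl⟩ := Nat.exists_prime_and_dvd hm1
  rw [Nat.cast_mul] at hm
  have hlt : m < q * m :=
    lt_mul_left (Nat.pos_of_ne_zero (by rintro rfl; simp at hm)) hq.one_lt
  rw [Nat.cast_mul, ← Ideal.span_singleton_mul_span_singleton] at hJ
  have hram (Q : (Ideal R)⁰) (hQ : (Q : Ideal R) ^ 2 = Ideal.span {(q : R)})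
      (hQH : ClassGroup.mk0 Q ∈ H) : ClassGroup.mk0 J ∈ H := by
    rw [← hQ] at hJ
    obtain ⟨J', rfl, hJ'⟩ := exists_eq_mul_of_sq_eq_sq_mul hJ
    exact map_mul ClassGroup.mk0 Q J' ▸ H.mul_mem hQH (ih m hlt J' hJ')
  rcases hH q hq with hrad | ⟨Q, hQ, hQH⟩
  · by_cases hu : IsUnit (q : R)
    · exact hram 1 (by simpa [← Ideal.one_eq_top, eq_comm] using Ideal.span_singleton_eq_top.2 hu)
        (map_one (ClassGroup.mk0 (R := R)) ▸ H.one_mem)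
    have hq0 := span_singleton_mem_nonZeroDivisors (left_ne_zero_of_mul hm)
    obtain ⟨J', rfl, hJ'⟩ := exists_eq_mul_of_sq_eq_mul (I := ⟨_, hq0⟩) hrad hJ
    obtain ⟨m, rfl⟩ : q ∣ m := natCast_dvd_of_dvd_natCast hq hu <|
      Ideal.span_singleton_le_span_singleton.1 (hJ'.ge.trans Ideal.mul_le_left)
    rw [Nat.cast_mul, ← Ideal.span_singleton_mul_span_singleton] at hJ'
    rw [map_mul, mk0_span_singleton, one_mul]
    refine ih m ?_ J' (mul_left_cancel₀ (nonZeroDivisors.coe_ne_zero ⟨_, hq0⟩) hJ')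
    nlinarith [hq.one_lt]
  · exact hram Q hQ hQH

end ClassGroup

section Legendre

lemma aLeg_eq_zero_iff {a : ℤ} {p : ℕ} : aLeg a p = 0 ↔ IsSquare (a : ZMod p) := by
  simp [aLeg]

lemma aLeg_eq_one_iff {a : ℤ} {p : ℕ} : aLeg a p = 1 ↔ ¬ IsSquare (a : ZMod p) := by
  simp [aLeg]

lemma aLeg_sq (a : ℤ) (p : ℕ) : aLeg (a ^ 2) p = 0 :=
  aLeg_eq_zero_iff.2 ⟨a, by push_cast; ring⟩

lemma aLeg_congr {a b : ℤ} {p : ℕ} (h : a ≡ b [ZMOD p]) : aLeg a p = aLeg b p := by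
  rw [aLeg, aLeg, (ZMod.intCast_eq_intCast_iff a b p).2 h]

lemma eq_zero_or_eq_one (x : ZMod 2) : x = 0 ∨ x = 1 := by
  revert x; decide

lemma neg_one_pow_val_injective : Function.Injective fun x : ZMod 2 => (-1 : ℤ) ^ x.val := by
  decide

lemma neg_one_pow_val_add (x y : ZMod 2) :
    (-1 : ℤ) ^ (x + y).val = (-1) ^ x.val * (-1) ^ y.val := by
  revert x y; decide

variable {p : ℕ} [Fact p.Prime]

lemma legendreSym_eq_neg_one_pow {a : ℤ} (ha : ¬ (p : ℤ) ∣ a) :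
    legendreSym p a = (-1) ^ (aLeg a p).val := by
  have ha0 : (a : ZMod p) ≠ 0 := by rwa [Ne, ZMod.intCast_zmod_eq_zero_iff_dvd]
  rcases eq_zero_or_eq_one (aLeg a p) with h | h
  · simp [h, (legendreSym.eq_one_iff p ha0).2 (aLeg_eq_zero_iff.1 h)]
  · simp [h, (legendreSym.eq_neg_one_iff p).2 (aLeg_eq_one_iff.1 h), ZMod.val_one]

lemma aLeg_mul {a b : ℤ} (ha : ¬ (p : ℤ) ∣ a) (hb : ¬ (p : ℤ) ∣ b) :
    aLeg (a * b) p = aLeg a p + aLeg b p := by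
  have hab : ¬ (p : ℤ) ∣ a * b :=
    fun h => ((Nat.prime_iff_prime_int.1 Fact.out).dvd_or_dvd h).elim ha hb
  apply neg_one_pow_val_injective
  simp only [neg_one_pow_val_add, ← legendreSym_eq_neg_one_pow, ha, hb, hab, not_false_eq_true,
    legendreSym.mul]

lemma exists_aLeg_eq (hp2 : p ≠ 2) (v : ZMod 2) : ∃ a : ℕ, ¬ p ∣ a ∧ aLeg a p = v := by
  rcases eq_zero_or_eq_one v with rfl | rfl
  · exact ⟨1, (Fact.out : p.Prime).not_dvd_one, by simpa using aLeg_sq 1 p⟩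
  · obtain ⟨x, hx⟩ := FiniteField.exists_nonsquare (F := ZMod p) (by rwa [ZMod.ringChar_zmod_n])
    refine ⟨x.val, fun hd => hx ?_, aLeg_eq_one_iff.2 (by simpa using hx)⟩
    rw [← ZMod.natCast_zmod_val x, (ZMod.natCast_eq_zero_iff _ _).2 hd]
    exact IsSquare.zero

end Legendre

section NormResidue

/-- The additive norm residue symbol `(m, -pe)_p ∈ F₂` of `m ≠ 0` at an odd prime `p ∤ e`. Since
`(p, -p)_p` is trivial, the value at `m = p` is `[e/p]`; this makes the formula on
`m = p ^ v * u` explicit. -/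
noncomputable def normResidue (p : ℕ) (e : ℤ) (m : ℕ) : ZMod 2 :=
  aLeg (ordCompl[p] m : ℕ) p + m.factorization p * aLeg e p

variable {p : ℕ} {e : ℤ}

lemma normResidue_of_not_dvd {m : ℕ} (h : ¬ p ∣ m) : normResidue p e m = aLeg m p := by
  simp [normResidue, Nat.factorization_eq_zero_of_not_dvd h]

variable [hp : Fact p.Prime]

lemma normResidue_self : normResidue p e p = aLeg e p := by
  have h1 : aLeg 1 p = 0 := by simpa using aLeg_sq 1 p
  simp [normResidue, hp.out.factorization_self, Nat.div_self hp.out.pos, h1]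

lemma normResidue_mul {a b : ℕ} (ha : a ≠ 0) (hb : b ≠ 0) :
    normResidue p e (a * b) = normResidue p e a + normResidue p e b := by
  have ha' := Nat.not_dvd_ordCompl hp.out ha
  have hb' := Nat.not_dvd_ordCompl hp.out hb
  rw [normResidue, Nat.ordCompl_mul, Nat.factorization_mul ha hb, Nat.cast_mul,
    aLeg_mul (by exact_mod_cast ha') (by exact_mod_cast hb'), Finsupp.add_apply, Nat.cast_add,
    normResidue, normResidue]
  ring

lemma normResidue_sq {a : ℕ} (ha : a ≠ 0) : normResidue p e (a ^ 2) = 0 := by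
  rw [sq, normResidue_mul ha ha, CharTwo.add_self_eq_zero]

lemma normResidue_form_of_not_dvd_left {m : ℕ} {x y : ℤ} (hm : (m : ℤ) = x ^ 2 + p * e * y ^ 2)
    (hx : ¬ (p : ℤ) ∣ x) : normResidue p e m = 0 := by
  have hmx : (m : ℤ) ≡ x ^ 2 [ZMOD p] :=
    Int.modEq_iff_dvd.2 ⟨-(e * y ^ 2), by rw [hm]; ring⟩
  have hpm : ¬ p ∣ m := fun h => hx <| (Nat.prime_iff_prime_int.1 hp.out).dvd_of_dvd_pow <|
    hmx.dvd_iff.1 (by exact_mod_cast h)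
  rw [normResidue_of_not_dvd hpm, aLeg_congr hmx, aLeg_sq]

lemma normResidue_form_of_not_dvd_right (he : ¬ (p : ℤ) ∣ e) {m : ℕ} {x y : ℤ}
    (hm : (m : ℤ) = (p * x) ^ 2 + p * e * y ^ 2) (hy : ¬ (p : ℤ) ∣ y) : normResidue p e m = 0 := by
  have hpI := Nat.prime_iff_prime_int.1 hp.out
  obtain ⟨m, rfl⟩ : p ∣ m := Int.natCast_dvd_natCast.1 ⟨p * x ^ 2 + e * y ^ 2, by rw [hm]; ring⟩
  have hme : (m : ℤ) ≡ e * y ^ 2 [ZMOD p] := by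
    refine Int.modEq_iff_dvd.2 ⟨-x ^ 2, mul_left_cancel₀ hpI.ne_zero ?_⟩
    push_cast at hm
    linear_combination -hm
  have hey : ¬ (p : ℤ) ∣ y ^ 2 := fun h => hy (hpI.dvd_of_dvd_pow h)
  have hpm : ¬ p ∣ m := fun h =>
    (hpI.dvd_or_dvd (hme.dvd_iff.1 (Int.natCast_dvd_natCast.2 h))).elim he hey
  rw [normResidue_mul hp.out.ne_zero (by rintro rfl; simp at hpm), normResidue_self,
    normResidue_of_not_dvd hpm, aLeg_congr hme, aLeg_mul he hey, aLeg_sq, add_zero,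
    CharTwo.add_self_eq_zero]

lemma normResidue_form (he : ¬ (p : ℤ) ∣ e) {m : ℕ} (hm0 : m ≠ 0) {x y : ℤ}
    (hm : (m : ℤ) = x ^ 2 + p * e * y ^ 2) : normResidue p e m = 0 := by
  have hg : 0 < Int.gcd x y := Nat.pos_of_ne_zero fun h => hm0 <| by
    obtain ⟨rfl, rfl⟩ := Int.gcd_eq_zero_iff.1 h
    simpa using hm
  obtain ⟨x', y', hxy, hx, hy⟩ := Int.exists_gcd_one hg
  set g := Int.gcd x y
  have hgm : (m : ℤ) = (g ^ 2 : ℕ) * (x' ^ 2 + p * e * y' ^ 2) := by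
    rw [hm, hx, hy]; push_cast; ring
  obtain ⟨m', rfl⟩ : g ^ 2 ∣ m := Int.natCast_dvd_natCast.1 ⟨_, hgm⟩
  have hm' : (m' : ℤ) = x' ^ 2 + p * e * y' ^ 2 := by
    refine mul_left_cancel₀ (a := ((g ^ 2 : ℕ) : ℤ)) (by positivity) ?_
    rw [← hgm, Nat.cast_mul]
  rw [normResidue_mul (by positivity) (right_ne_zero_of_mul hm0), normResidue_sq hg.ne', zero_add]
  by_cases hpx : (p : ℤ) ∣ x'
  · obtain ⟨x₁, rfl⟩ := hpx
    refine normResidue_form_of_not_dvd_right he hm' fun hpy => ?_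
    have : (p : ℤ) ∣ 1 := by
      simpa [hxy] using Int.dvd_coe_gcd (Dvd.intro x₁ rfl) hpy
    exact (Nat.prime_iff_prime_int.1 hp.out).not_dvd_one this
  · exact normResidue_form_of_not_dvd_left hm' hpx

end NormResidue

section Dirichlet

lemma exists_prime_gt_forall_modEq {ι : Type*} [Finite ι] {a m : ι → ℕ}
    (hm : Pairwise (Function.onFun Nat.Coprime m)) (hm0 : ∀ i, m i ≠ 0)
    (ha : ∀ i, (a i).Coprime (m i)) (N : ℕ) : ∃ q > N, q.Prime ∧ ∀ i, q ≡ a i [MOD m i] := by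
  cases nonempty_fintype ι
  obtain ⟨x, hx⟩ := Nat.chineseRemainderOfFinset a m Finset.univ (fun i _ => hm0 i)
    (fun i _ j _ hij => hm hij)
  have hxm : x.Coprime (∏ i, m i) := Nat.Coprime.prod_right fun i _ =>
    (hx i (Finset.mem_univ i)).gcd_eq.trans (ha i)
  obtain ⟨q, hqN, hq, hqx⟩ :=
    Nat.forall_exists_prime_gt_and_modEq N (Finset.prod_ne_zero_iff.2 fun i _ => hm0 i) hxm
  exact ⟨q, hqN, hq, fun i =>
    (hqx.of_dvd (Finset.dvd_prod_of_mem m (Finset.mem_univ i))).trans (hx i (Finset.mem_univ i))⟩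

variable {ι : Type*} {p : ι → ℕ} [hp : ∀ i, Fact (p i).Prime]

lemma exists_prime_gt_aLeg_eq [Finite ι] (hp2 : ∀ i, p i ≠ 2) (hinj : Function.Injective p) {s : ℤ}
    (hs : s = 1 ∨ s = -1) (v : ι → ZMod 2) (N : ℕ) :
    ∃ q > N, q.Prime ∧ ZMod.χ₄ q = s ∧ ∀ i, ¬ p i ∣ q ∧ aLeg q (p i) = v i := by
  choose a ha using fun i => exists_aLeg_eq (hp2 i) (v i)
  obtain ⟨ε, hε, hεs⟩ : ∃ ε : ℕ, ε.Coprime 4 ∧ ZMod.χ₄ ε = s := by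
    rcases hs with rfl | rfl
    · exact ⟨1, by decide, by decide⟩
    · exact ⟨3, by decide, by decide⟩
  have hp4 (i : ι) : (p i).Coprime 4 :=
    ((Nat.coprime_primes (hp i).out Nat.prime_two).2 (hp2 i)).pow_right 2
  obtain ⟨q, hqN, hq, hqa⟩ := exists_prime_gt_forall_modEq (ι := Option ι)
    (a := fun o => o.elim ε a) (m := fun o => o.elim 4 p) (N := N) (by
      rintro (_ | i) (_ | j) hij
      · exact absurd rfl hij
      · exact (hp4 j).symm
      · exact hp4 i
      · exact (Nat.coprime_primes (hp i).out (hp j).out).2 fun h => hij (congrArg _ (hinj h)))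
    (by rintro (_ | i); exacts [four_ne_zero, (hp i).out.ne_zero])
    (by rintro (_ | i); exacts [hε, ((hp i).out.coprime_iff_not_dvd.2 (ha i).1).symm])
  have hχ : ZMod.χ₄ q = ZMod.χ₄ ε := congrArg _ ((ZMod.natCast_eq_natCast_iff _ _ _).2 (hqa none))
  exact ⟨q, hqN, hq, hχ.trans hεs, fun i => ⟨((hqa (some i)).dvd_iff dvd_rfl).not.2 (ha i).1,
    (aLeg_congr (Int.natCast_modEq_iff.2 (hqa (some i)))).trans (ha i).2⟩⟩

variable [Fintype ι] (hp4 : ∀ i, p i % 4 = 1)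
include hp4

lemma legendreSym_neg_prod {q : ℕ} [Fact q.Prime] (hq2 : q ≠ 2) (hq : ∀ i, ¬ p i ∣ q) :
    legendreSym q (-∏ i, (p i : ℤ)) = ZMod.χ₄ q * ∏ i, (-1) ^ (aLeg q (p i)).val := by
  have hsymm (i : ι) : legendreSym q (p i) = (-1) ^ (aLeg q (p i)).val := by
    rw [legendreSym.quadratic_reciprocity_one_mod_four (hp4 i) hq2]
    exact legendreSym_eq_neg_one_pow (by exact_mod_cast hq i)
  rw [neg_eq_neg_one_mul, legendreSym.mul, legendreSym.at_neg_one hq2,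
    ← Finset.prod_congr rfl fun i _ => hsymm i]
  exact congrArg _ (map_prod (legendreSym.hom q) _ _)

-- By reciprocity, the residue of `q` modulo `4` can be chosen to make `-∏ p i` a square.
lemma exists_prime_gt_aLeg_eq_isSquare (hinj : Function.Injective p) (v : ι → ZMod 2) (N : ℕ) :
    ∃ q > N, q.Prime ∧ (∀ i, ¬ p i ∣ q ∧ aLeg q (p i) = v i) ∧
      IsSquare ((-∏ i, (p i : ℤ) : ℤ) : ZMod q) := by
  have hS : (∏ i, (-1 : ℤ) ^ (v i).val) * ∏ i, (-1 : ℤ) ^ (v i).val = 1 := by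
    simp [← Finset.prod_mul_distrib, ← mul_pow]
  obtain ⟨q, hqN, hq, hχ, hqp⟩ := exists_prime_gt_aLeg_eq (fun i => by have := hp4 i; omega) hinj
    (mul_self_eq_one_iff.1 hS) v (max N 2)
  have : Fact q.Prime := ⟨hq⟩
  have hq2 : q ≠ 2 := ((le_max_right N 2).trans_lt hqN).ne'
  have hleg : legendreSym q (-∏ i, (p i : ℤ)) = 1 := by
    rw [legendreSym_neg_prod hp4 hq2 fun i => (hqp i).1, hχ]
    simpa only [(hqp _).2] using hS
  have h0 : ((-∏ i, (p i : ℤ) : ℤ) : ZMod q) ≠ 0 := fun h => by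
    simp [(legendreSym.eq_zero_iff q _).2 h] at hleg
  exact ⟨q, (le_max_left N 2).trans_lt hqN, hq, hqp, (legendreSym.eq_one_iff q h0).1 hleg⟩

end Dirichlet

section Redei

/-- The rational primes ramified in `ℚ(√-n)` for `n = ∏ p i ≡ 1 (mod 4)`, indexed like the columns
of the Rédei matrix: the `p i`, followed by `2`. -/
def ramifiedPrime {ι : Type*} (p : ι → ℕ) : ι ⊕ Unit → ℕ := Sum.elim p fun _ => 2

lemma aLeg_neg_four {p : ℕ} [Fact p.Prime] (hp4 : p % 4 = 1) : aLeg (-4) p = 0 := by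
  obtain ⟨y, hy⟩ := ZMod.exists_sq_eq_neg_one_iff.2 (show p % 4 ≠ 3 by omega)
  exact aLeg_eq_zero_iff.2 ⟨2 * y, by push_cast; linear_combination 4 * hy⟩

lemma redeiOfN_apply {n k : ℕ} {p : Fin k → ℕ} [hp : ∀ i, Fact (p i).Prime]
    (hinj : Function.Injective p) (hp4 : ∀ i, p i % 4 = 1) {e : Fin k → ℤ}
    (hpe : ∀ i, (n : ℤ) = p i * e i) (he : ∀ i, ¬ (p i : ℤ) ∣ e i) (i : Fin k) (j : Fin k ⊕ Unit) :
    redeiOfN n k p i j = normResidue (p i) (e i) (ramifiedPrime p j) := by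
  have hp2 : ¬ p i ∣ 2 := fun h => by
    have := (Nat.prime_dvd_prime_iff_eq (hp i).out Nat.prime_two).1 h
    have := hp4 i
    omega
  rcases j with j | j
  · rcases eq_or_ne i j with rfl | hij
    · have h4 : ¬ (p i : ℤ) ∣ -4 := fun h => hp2 <| (hp i).out.dvd_of_dvd_pow (n := 2) <| by
        exact_mod_cast (dvd_neg.1 h)
      have hdiv : -4 * (n : ℤ) / p i = -4 * e i := Int.ediv_eq_of_eq_mul_right
        (by exact_mod_cast (hp i).out.ne_zero) (by rw [hpe i]; ring)
      simp only [redeiOfN, ramifiedPrime, Matrix.of_apply, Sum.elim_inl, if_true, hdiv,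
        normResidue_self]
      rw [aLeg_mul h4 (he i), aLeg_neg_four (hp4 i), zero_add]
    · have hpj : ¬ p i ∣ p j := fun h =>
        hij (hinj ((Nat.prime_dvd_prime_iff_eq (hp i).out (hp j).out).1 h))
      simp [redeiOfN, ramifiedPrime, hij, normResidue_of_not_dvd hpj]
  · simp [redeiOfN, ramifiedPrime, normResidue_of_not_dvd hp2]

end Redei

section Quadratic

open Algebra

lemma sq_eq_trace_mul_sub_norm {R S : Type*} [CommRing R] [Nontrivial R] [CommRing S] [Algebra R S]
    [IsQuadraticExtension R S] (x : S) :
    x ^ 2 = algebraMap R S (trace R S x) * x - algebraMap R S (norm R x) := by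
  have b : Module.Basis (Fin 2) R S := Module.finBasisOfFinrankEq R S
    (IsQuadraticExtension.finrank_eq_two R S)
  apply leftMulMatrix_injective b
  have h := Matrix.aeval_self_charpoly (leftMulMatrix b x)
  rw [Matrix.charpoly_fin_two, ← trace_eq_matrix_trace b, ← norm_eq_matrix_det b] at h
  simp only [map_add, map_sub, map_mul, map_pow, Polynomial.aeval_X, Polynomial.aeval_C] at h
  simp only [map_sub, map_mul, map_pow, AlgHom.commutes]
  rw [← sub_eq_zero, ← h]
  abel

variable {S : Type*} [CommRing S]

lemma trace_intCast_mul (m : ℤ) (x : S) : trace ℤ S (m * x) = m * trace ℤ S x := by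
  rw [← zsmul_eq_mul, map_zsmul, smul_eq_mul]

lemma dvd_trace_of_intCast_dvd {m : ℤ} {x : S} (h : (m : S) ∣ x) : m ∣ trace ℤ S x := by
  obtain ⟨y, rfl⟩ := h
  exact ⟨_, trace_intCast_mul m y⟩

lemma natCast_dvd_trace_of_dvd {q : ℕ} {x : S} (h : (q : S) ∣ x) : (q : ℤ) ∣ trace ℤ S x :=
  dvd_trace_of_intCast_dvd (by simpa using h)

variable [IsQuadraticExtension ℤ S]

lemma charZero_of_isQuadraticExtension : CharZero S := by
  have : Nontrivial S := Module.nontrivial_of_finrank_pos (R := ℤ) <| by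
    rw [IsQuadraticExtension.finrank_eq_two]
    exact two_pos
  exact charZero_of_injective_algebraMap (FaithfulSMul.algebraMap_injective ℤ S)

lemma sq_eq_trace_mul_sub_norm_int (x : S) : x ^ 2 = (trace ℤ S x : S) * x - (norm ℤ x : S) := by
  simpa using sq_eq_trace_mul_sub_norm (R := ℤ) x

lemma mul_trace_sub_self (x : S) : x * ((trace ℤ S x : S) - x) = (norm ℤ x : S) := by
  linear_combination -sq_eq_trace_mul_sub_norm_int x

lemma trace_intCast (m : ℤ) : trace ℤ S (m : S) = 2 * m := by
  simpa [IsQuadraticExtension.finrank_eq_two] using trace_algebraMap (S := S) m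

lemma norm_intCast (m : ℤ) : norm ℤ (m : S) = m ^ 2 := by
  simpa [IsQuadraticExtension.finrank_eq_two] using norm_algebraMap_of_basis
    (Module.finBasisOfFinrankEq ℤ S (IsQuadraticExtension.finrank_eq_two ℤ S)) m

lemma dvd_trace_of_intCast_dvd_sq {q : ℤ} (hq : Prime q) {x : S} (h : (q : S) ∣ x ^ 2) :
    q ∣ trace ℤ S x := by
  have hnorm : q ∣ norm ℤ x := by
    obtain ⟨y, hy⟩ := h
    refine hq.dvd_of_dvd_pow (n := 2) ⟨q * norm ℤ y, ?_⟩
    rw [← map_pow, hy, map_mul, norm_intCast]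
    ring
  have hTx : (q : S) ∣ (trace ℤ S x : S) * x := by
    have hN : (q : S) ∣ (norm ℤ x : S) := by exact_mod_cast map_dvd (Int.castRingHom S) hnorm
    convert dvd_add h hN using 1
    linear_combination -sq_eq_trace_mul_sub_norm_int x
  have hTT : q ∣ trace ℤ S x * trace ℤ S x := trace_intCast_mul _ x ▸ dvd_trace_of_intCast_dvd hTx
  exact (hq.dvd_or_dvd hTT).elim id id

section Pure

variable {ω : S} {n : ℕ} (hω : ω ^ 2 = -n) (hn : 0 < n)
include hω hn

lemma norm_and_trace_of_sq_eq_neg : norm ℤ ω = n ∧ trace ℤ S ω = 0 := by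
  have := charZero_of_isQuadraticExtension (S := S)
  have hN : norm ℤ ω ^ 2 = n ^ 2 := by
    rw [← map_pow, hω, ← Int.cast_natCast n, ← Int.cast_neg, norm_intCast, neg_sq]
  have hT : (trace ℤ S ω : S) * ω = ((norm ℤ ω - n : ℤ) : S) := by
    push_cast
    linear_combination hω - sq_eq_trace_mul_sub_norm_int ω
  have hTT := congrArg (trace ℤ S) hT
  rw [trace_intCast_mul, trace_intCast] at hTT
  rcases sq_eq_sq_iff_eq_or_eq_neg.1 hN with h | h <;> rw [h] at hTT
  · exact ⟨h, by simpa using hTT⟩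
  · nlinarith [sq_nonneg (trace ℤ S ω)]

lemma trace_mul_self_mul (x : S) :
    (trace ℤ S (ω * x) : S) * (ω * x) =
      ((2 * n * norm ℤ x : ℤ) : S) - ((n : ℤ) : S) * ((trace ℤ S x : S) * x) := by
  have h := sq_eq_trace_mul_sub_norm_int (ω * x)
  rw [map_mul (norm ℤ), (norm_and_trace_of_sq_eq_neg hω hn).1] at h
  push_cast at h ⊢
  linear_combination -h + x ^ 2 * hω - n * sq_eq_trace_mul_sub_norm_int x

lemma four_mul_mul_norm (x : S) :
    4 * n * norm ℤ x = trace ℤ S (ω * x) ^ 2 + n * trace ℤ S x ^ 2 := by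
  have h := congrArg (trace ℤ S) (trace_mul_self_mul hω hn x)
  rw [map_sub, trace_intCast_mul, trace_intCast_mul, trace_intCast_mul, trace_intCast] at h
  linear_combination -h

lemma norm_nonneg_of_sq_eq_neg (x : S) : 0 ≤ norm ℤ x := by
  have := four_mul_mul_norm hω hn x
  by_contra! h
  nlinarith [sq_nonneg (trace ℤ S (ω * x)), sq_nonneg (trace ℤ S x),
    mul_neg_of_pos_of_neg (Int.natCast_pos.2 hn) h]

lemma trace_add_mul (u v : ℤ) : trace ℤ S (u + v * ω) = 2 * u := by
  rw [map_add, trace_intCast, trace_intCast_mul, (norm_and_trace_of_sq_eq_neg hω hn).2, mul_zero,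
    add_zero]

lemma norm_add_mul (u v : ℤ) : norm ℤ (u + v * ω) = u ^ 2 + n * v ^ 2 := by
  have := charZero_of_isQuadraticExtension (S := S)
  have h := mul_trace_sub_self (u + v * ω)
  rw [trace_add_mul hω hn] at h
  have : ((norm ℤ (u + v * ω) : ℤ) : S) = ((u ^ 2 + n * v ^ 2 : ℤ) : S) := by
    push_cast at h ⊢
    linear_combination -h - v ^ 2 * hω
  exact_mod_cast this

section IsDomain

variable [IsDomain S]

lemma two_mul_mul_eq (x : S) : 2 * (ω * x) = trace ℤ S (ω * x) + trace ℤ S x * ω := by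
  rcases eq_or_ne x 0 with rfl | hx
  · simp
  have := charZero_of_isQuadraticExtension (S := S)
  have hn0 : (n : S) ≠ 0 := by exact_mod_cast hn.ne'
  refine mul_left_cancel₀ hx (mul_left_cancel₀ hn0 ?_)
  have h := trace_mul_self_mul hω hn x
  push_cast at h
  linear_combination ω * h - (trace ℤ S (ω * x) : S) * x * hω - 2 * n * ω * mul_trace_sub_self x

lemma isRadical_span_natCast {q : ℕ} (hq : q.Prime) (hqn : ¬ q ∣ 2 * n) :
    (Ideal.span {(q : S)}).IsRadical := by
  have hqI := Nat.prime_iff_prime_int.1 hq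
  refine (Ideal.isRadical_iff_pow_one_lt 2 one_lt_two).2 fun x hx => ?_
  rw [Ideal.mem_span_singleton] at hx ⊢
  have hcast {m : ℤ} (hm : (q : ℤ) ∣ m) : (q : S) ∣ m := by
    simpa using map_dvd (Int.castRingHom S) hm
  have hx' : ((q : ℤ) : S) ∣ x ^ 2 := by simpa using hx
  have hωx' : ((q : ℤ) : S) ∣ (ω * x) ^ 2 := mul_pow ω x 2 ▸ hx'.mul_left _
  have h2ωx : (q : S) ∣ 2 * (ω * x) := two_mul_mul_eq hω hn x ▸
    (hcast (dvd_trace_of_intCast_dvd_sq hqI hωx')).add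
      ((hcast (dvd_trace_of_intCast_dvd_sq hqI hx')).mul_right ω)
  have h2nx : (q : S) ∣ ((2 * n : ℕ) : S) * x := by
    convert h2ωx.mul_left (-ω) using 1
    push_cast
    linear_combination 2 * x * hω
  exact ((hq.coprime_iff_not_dvd.2 hqn).cast (R := S)).dvd_of_dvd_mul_left h2nx

end IsDomain

variable [IsDedekindDomain S]

open Ideal

lemma absNorm_span_singleton_eq_norm (x : S) : (absNorm (span {x}) : ℤ) = norm ℤ x := by
  rw [absNorm_span_singleton, Int.natAbs_of_nonneg (norm_nonneg_of_sq_eq_neg hω hn x)]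

lemma normResidue_absNorm_span_singleton {p : ℕ} [Fact p.Prime] {e : ℤ} (hpe : (n : ℤ) = p * e)
    (he : ¬ (p : ℤ) ∣ e) {x : S} (hx : x ≠ 0) : normResidue p e (absNorm (span {x})) = 0 := by
  have hN0 : absNorm (span {x}) ≠ 0 := by
    rwa [Ne, absNorm_eq_zero_iff, span_singleton_eq_bot]
  have h4n : normResidue p e (4 * n) = 0 :=
    normResidue_form he (by positivity) (x := 0) (y := 2) (by push_cast; rw [hpe]; ring)
  have h4nN : normResidue p e (4 * n * absNorm (span {x})) = 0 := by
    refine normResidue_form he (by positivity) (x := trace ℤ S (ω * x)) (y := trace ℤ S x) ?_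
    rw [← hpe, ← four_mul_mul_norm hω hn, ← absNorm_span_singleton_eq_norm hω hn]
    push_cast
    ring
  rwa [normResidue_mul (by positivity) hN0, h4n, zero_add] at h4nN

end Pure

section DedekindDomain

open Ideal

variable [IsDedekindDomain S]

lemma absNorm_of_sq_eq_span_natCast {I : Ideal S} {q : ℕ} (hI : I ^ 2 = span {(q : S)}) :
    absNorm I = q := by
  refine pow_left_injective two_ne_zero ?_
  simp only
  rw [← map_pow, hI, absNorm_span_natCast, IsQuadraticExtension.finrank_eq_two]

lemma absNorm_span_pair {q : ℕ} (hq : q.Prime) {x : S} (hN : (q : ℤ) ∣ norm ℤ x)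
    (hT : ¬ (q : ℤ) ∣ trace ℤ S x) : absNorm (span {(q : S), x}) = q := by
  have hdvd : absNorm (span {(q : S), x}) ∣ q ^ 2 := by
    rw [← IsQuadraticExtension.finrank_eq_two ℤ S, ← absNorm_span_natCast]
    exact absNorm_dvd_absNorm_of_le (span_mono (by simp))
  obtain ⟨j, hj, hqj⟩ := (Nat.dvd_prime_pow hq).1 hdvd
  have hj0 : j ≠ 0 := by
    rintro rfl
    rw [pow_zero, absNorm_eq_one_iff, eq_top_iff_one, mem_span_pair] at hqj
    obtain ⟨u, v, huv⟩ := hqj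
    have hNS : (q : S) ∣ (norm ℤ x : S) := by simpa using map_dvd (Int.castRingHom S) hN
    have hconj : (q : S) ∣ (trace ℤ S x : S) - x := by
      convert (Dvd.intro (u * ((trace ℤ S x : S) - x)) rfl : (q : S) ∣ _).add (hNS.mul_left v)
        using 1
      linear_combination -((trace ℤ S x : S) - x) * huv + v * mul_trace_sub_self x
    refine hT ?_
    have := natCast_dvd_trace_of_dvd hconj
    rw [map_sub, trace_intCast] at this
    convert this using 1
    ring
  have hj2 : j ≠ 2 := by
    rintro rfl
    obtain ⟨E, hE⟩ : span {(q : S), x} ∣ span {(q : S)} :=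
      dvd_span_singleton.2 (subset_span (by simp))
    have hE1 : absNorm E = 1 := by
      have := congrArg absNorm hE
      rw [map_mul, hqj, absNorm_span_natCast, IsQuadraticExtension.finrank_eq_two] at this
      exact (Nat.eq_of_mul_eq_mul_left (pow_pos hq.pos 2) (by rw [← this, mul_one])).symm
    rw [absNorm_eq_one_iff.1 hE1, mul_top] at hE
    exact hT (natCast_dvd_trace_of_dvd
      (mem_span_singleton.1 (hE.ge (subset_span (by simp : x ∈ ({(q : S), x} : Set S))))))
  obtain rfl : j = 1 := by omega
  simpa using hqj

lemma exists_mul_sq_eq_span_singleton {D : Ideal S} {M c : ℕ} {α : S} (hD : D ^ 2 = span {(M : S)})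
    (hM : M ≠ 0) (hα : norm ℤ α = M * c ^ 2) (hMT : (M : ℤ) ∣ trace ℤ S α)
    (hcT : IsCoprime (c : ℤ) (trace ℤ S α)) :
    ∃ B : Ideal S, absNorm B = c ∧ D * B ^ 2 = span {α} := by
  have hCH := sq_eq_trace_mul_sub_norm_int α
  rw [hα] at hCH
  push_cast at hCH
  have hMα : (M : S) ∣ α ^ 2 := by
    rw [hCH]
    exact ((by simpa using map_dvd (Int.castRingHom S) hMT : (M : S) ∣ _).mul_right _).sub
      (Dvd.intro _ rfl)
  obtain ⟨E, hE⟩ : D ∣ span {α} := by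
    rw [← UniqueFactorizationMonoid.pow_dvd_pow_iff_dvd two_ne_zero, hD, span_singleton_pow]
    exact dvd_span_singleton.2 (mem_span_singleton.2 hMα)
  have hEc : absNorm E = c ^ 2 := by
    have := congrArg absNorm hE
    rw [map_mul, absNorm_of_sq_eq_span_natCast hD, absNorm_span_singleton, hα] at this
    refine (Nat.eq_of_mul_eq_mul_left (Nat.pos_of_ne_zero hM) ?_).symm
    rw [← this]
    exact_mod_cast Int.natAbs_natCast (M * c ^ 2)
  have hcT' : IsCoprime (c : S) (trace ℤ S α : S) := by
    simpa using hcT.map (Int.castRingHom S)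
  have hcM : IsCoprime ((M : ℕ) : S) (c ^ 2) := by
    obtain ⟨t, ht⟩ := hMT
    have := (ht ▸ hcT).of_mul_right_left.symm.pow_right (n := 2)
    simpa using this.map (Int.castRingHom S)
  have hEspan : E = span {(c : S) ^ 2, α} :=
    eq_span_pair_of_mul_eq_span_singleton hD hE.symm
      (by simpa [hEc] using absNorm_mem E) hcM
  have hEsq : E = span {(c : S), α} ^ 2 := by
    rw [hEspan, span_pair_sq_eq_span_pair hCH hcT']
  refine ⟨span {(c : S), α}, pow_left_injective two_ne_zero ?_, by rw [← hEsq, hE]⟩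
  simp only
  rw [← map_pow, ← hEsq, hEc]

-- If `ββ' = m²` then `β(m + β')²` is a rational integer, so `I` is equivalent to `I * (m + β')`.
lemma exists_mk0_eq_sq_eq_span_natCast {I : (Ideal S)⁰} {β : S} (hI : (I : Ideal S) ^ 2 = span {β})
    (hβ : norm ℤ β = absNorm (I : Ideal S) ^ 2) :
    ∃ (m : ℕ) (J : (Ideal S)⁰), (J : Ideal S) ^ 2 = span {(m : S)} ∧
      ClassGroup.mk0 J = ClassGroup.mk0 I := by
  have hchar := charZero_of_isQuadraticExtension (S := S)
  set m := absNorm (I : Ideal S)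
  have hconj : β * ((trace ℤ S β : S) - β) = m ^ 2 := by
    rw [mul_trace_sub_self, hβ]
    norm_cast
  rcases eq_or_ne ((m : S) + ((trace ℤ S β : S) - β)) 0 with h | h
  · have hm : (m : S) ≠ 0 := by exact_mod_cast absNorm_ne_zero_of_nonZeroDivisors I
    have hβm : β = -m := mul_left_cancel₀ hm (by linear_combination -hconj + β * h)
    exact ⟨m, I, by rw [hI, hβm, span_singleton_neg], rfl⟩
  · refine ⟨(m ^ 2 * (2 * m + trace ℤ S β)).natAbs,
      I * ⟨_, span_singleton_mem_nonZeroDivisors h⟩, ?_, ?_⟩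
    · rw [← span_intCast_eq_span_natAbs, Submonoid.coe_mul, mul_pow, hI, span_singleton_pow,
        span_singleton_mul_span_singleton]
      congr 2
      push_cast
      linear_combination (2 * m + (trace ℤ S β : S) - β) * hconj
    · rw [map_mul, mk0_span_singleton, mul_one]

end DedekindDomain

end Quadratic

section Products

lemma prod_mod_four_eq_one {ι : Type*} {p : ι → ℕ} (hp4 : ∀ i, p i % 4 = 1) (s : Finset ι) :
    (∏ i ∈ s, p i) % 4 = 1 := by
  rw [Finset.prod_nat_mod, Finset.prod_congr rfl fun i _ => hp4 i, Finset.prod_const_one,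
    Nat.one_mod]

variable {ι : Type*} [Fintype ι] {p : ι → ℕ} [hp : ∀ i, Fact (p i).Prime]
  (hinj : Function.Injective p)
include hinj

lemma squarefree_prod_of_injective : Squarefree (∏ i, p i) :=
  Finset.squarefree_prod_of_pairwise_isCoprime
    (fun i _ j _ hij => Nat.coprime_iff_isRelPrime.1 <|
      (Nat.coprime_primes (hp i).out (hp j).out).2 (hinj.ne hij))
    fun i _ => (hp i).out.squarefree

lemma prod_filter_dvd {d : ℕ} (hd : d ∣ ∏ i, p i) : ∏ i with p i ∣ d, p i = d := by
  have hsq := (squarefree_prod_of_injective hinj).squarefree_of_dvd hd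
  rw [← Finset.prod_image (f := fun q => q) hinj.injOn]
  conv_rhs => rw [← Nat.prod_primeFactors_of_squarefree hsq]
  refine Finset.prod_congr ?_ fun _ _ => rfl
  ext q
  simp only [Finset.mem_image, Finset.mem_filter_univ, Nat.mem_primeFactors]
  constructor
  · rintro ⟨i, hi, rfl⟩
    exact ⟨(hp i).out, hi, hsq.ne_zero⟩
  · rintro ⟨hq, hqd, -⟩
    obtain ⟨i, -, hi⟩ := (hq.prime.dvd_finsetProd_iff _).1 (hqd.trans hd)
    obtain rfl := (Nat.prime_dvd_prime_iff_eq hq (hp i).out).1 hi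
    exact ⟨i, hqd, rfl⟩

lemma mod_four_eq_one_of_dvd_prod (hp4 : ∀ i, p i % 4 = 1) {d : ℕ} (hd : d ∣ ∏ i, p i) :
    d % 4 = 1 :=
  prod_filter_dvd hinj hd ▸ prod_mod_four_eq_one hp4 _

lemma exists_forall_eq_mul_not_dvd :
    ∃ e : ι → ℤ, ∀ i, ((∏ j, p j : ℕ) : ℤ) = p i * e i ∧ ¬ (p i : ℤ) ∣ e i := by
  choose e he using fun i => Finset.dvd_prod_of_mem p (Finset.mem_univ i)
  refine ⟨fun i => e i, fun i => ⟨by rw [he i]; push_cast; rfl, fun h => ?_⟩⟩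
  have : p i * p i ∣ ∏ j, p j :=
    he i ▸ Nat.mul_dvd_mul_left _ (Int.natCast_dvd_natCast.1 h)
  exact (hp i).out.not_isUnit (squarefree_prod_of_injective hinj _ this)

end Products

section Ramified

open Ideal

variable {S : Type*} [CommRing S] {n : ℕ} {ω : S}

lemma span_pair_sq_of_sq_eq_neg (hω : ω ^ 2 = -n) {q : ℕ} [hq : Fact q.Prime] {e : ℤ}
    (hqe : (n : ℤ) = q * e) (he : ¬ (q : ℤ) ∣ e) :
    span {(q : S), ω} ^ 2 = span {(q : S)} := by
  have hn := congrArg (Int.cast : ℤ → S) hqe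
  push_cast at hn
  refine span_pair_sq_eq_span_singleton (s := 0) (e := ((-e : ℤ) : S)) ?_ ?_
  · push_cast
    linear_combination hω - hn
  · have := ((Nat.prime_iff_prime_int.1 hq.out).coprime_iff_not_dvd.2 (dvd_neg.not.2 he)).map
      (Int.castRingHom S)
    simpa using this

lemma span_two_sq_of_sq_eq_neg (hω : ω ^ 2 = -n) (hn4 : n % 4 = 1) :
    span {(2 : S), 1 + ω} ^ 2 = span {(2 : S)} := by
  obtain ⟨m, rfl⟩ : ∃ m, n = 4 * m + 1 := ⟨n / 4, by omega⟩
  push_cast at hω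
  exact span_pair_sq_eq_span_singleton (s := 1) (e := -(2 * m + 1))
    (by linear_combination hω) ⟨m + 1, 1, by ring⟩

lemma sq_eq_span_of_isPrime [IsDedekindDomain S] [Algebra.IsQuadraticExtension ℤ S] {q : ℕ}
    (hq : q.Prime) {Q P : Ideal S} (hQ : Q ^ 2 = span {(q : S)}) [hP : P.IsPrime]
    (hqP : (q : S) ∈ P) : P ^ 2 = span {(q : S)} := by
  have hQP : Q ≤ P := hP.le_of_pow_le (n := 2) <| by rwa [hQ, span_singleton_le_iff_mem]
  have hQ' : Q.IsPrime := isPrime_of_irreducible_absNorm <| by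
    rwa [absNorm_of_sq_eq_span_natCast hQ]
  have hQ0 : Q ≠ ⊥ := by
    rintro rfl
    have := absNorm_of_sq_eq_span_natCast hQ
    simp [hq.ne_zero.symm] at this
  rw [← (hQ'.isMaximal hQ0).eq_of_le hP.ne_top hQP, hQ]

end Ramified

section TwoTorsion

open Ideal

variable {S : Type*} [CommRing S] [IsDedekindDomain S] [Algebra.IsQuadraticExtension ℤ S]

lemma ker_powMonoidHom_two_le {n : ℕ} {ω : S} (hω : ω ^ 2 = -n) (hn : 0 < n)
    {H : Subgroup (ClassGroup S)}
    (hH : ∀ q : ℕ, q.Prime → q ∣ 2 * n →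
      ∃ Q : (Ideal S)⁰, (Q : Ideal S) ^ 2 = span {(q : S)} ∧ ClassGroup.mk0 Q ∈ H) :
    (powMonoidHom 2 : ClassGroup S →* ClassGroup S).ker ≤ H := by
  intro t ht
  obtain ⟨I, rfl⟩ := ClassGroup.mk0_surjective t
  rw [MonoidHom.mem_ker, powMonoidHom_apply, ← map_pow, ClassGroup.mk0_eq_one_iff] at ht
  obtain ⟨β, hβ : (I : Ideal S) ^ 2 = span {β}⟩ := ht
  have hNβ : Algebra.norm ℤ β = absNorm (I : Ideal S) ^ 2 := by
    rw [← absNorm_span_singleton_eq_norm hω hn, ← hβ]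
    simp
  obtain ⟨m, J, hJ, hJI⟩ := exists_mk0_eq_sq_eq_span_natCast hβ hNβ
  rw [← hJI]
  refine mk0_mem_of_sq_eq_span_natCast (fun q hq => ?_) m J hJ
  by_cases hqn : q ∣ 2 * n
  · exact .inr (hH q hq hqn)
  · exact .inl (isRadical_span_natCast hω hn hq hqn)

end TwoTorsion

section Genus

open Ideal

variable {S : Type*} [CommRing S] [IsDedekindDomain S] [Algebra.IsQuadraticExtension ℤ S]
  {ι : Type*} {p : ι → ℕ} [hp : ∀ i, Fact (p i).Prime] {e : ι → ℤ} {n : ℕ} {ω : S}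

lemma exists_genusHom (hω : ω ^ 2 = -n) (hn : 0 < n) (hpe : ∀ i, (n : ℤ) = p i * e i)
    (he : ∀ i, ¬ (p i : ℤ) ∣ e i) :
    ∃ G : ClassGroup S →* Multiplicative (ι → ZMod 2), ∀ I : (Ideal S)⁰,
      G (ClassGroup.mk0 I) = .ofAdd fun i => normResidue (p i) (e i) (absNorm (I : Ideal S)) := by
  let f : (Ideal S)⁰ →* Multiplicative (ι → ZMod 2) :=
    { toFun I := .ofAdd fun i => normResidue (p i) (e i) (absNorm (I : Ideal S))
      map_one' := congrArg Multiplicative.ofAdd <| funext fun i => by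
        simpa using normResidue_sq (p := p i) (e := e i) one_ne_zero
      map_mul' I J := congrArg Multiplicative.ofAdd <| funext fun i => by
        rw [Submonoid.coe_mul, map_mul, normResidue_mul (absNorm_ne_zero_of_nonZeroDivisors I)
          (absNorm_ne_zero_of_nonZeroDivisors J)]
        rfl }
  refine exists_hom_classGroup f fun x hx => congrArg Multiplicative.ofAdd <| funext fun i =>
    normResidue_absNorm_span_singleton hω hn (hpe i) (he i) ?_
  rintro rfl
  simp at hx

lemma exists_absNorm_eq_of_isSquare (hω : ω ^ 2 = -n) (hn : 0 < n) {q : ℕ} (hq : q.Prime)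
    (hqn : ¬ q ∣ 2 * n) (hsq : IsSquare (-n : ZMod q)) :
    ∃ I : (Ideal S)⁰, absNorm (I : Ideal S) = q := by
  have : Fact q.Prime := ⟨hq⟩
  obtain ⟨s, hs⟩ := hsq
  have hN : (q : ℤ) ∣ (s.val : ℤ) ^ 2 + n * 1 ^ 2 := by
    rw [← ZMod.intCast_zmod_eq_zero_iff_dvd]
    push_cast
    rw [ZMod.natCast_zmod_val]
    linear_combination -hs
  have hT : ¬ (q : ℤ) ∣ 2 * s.val := fun h => hqn <| by
    rcases (Nat.prime_iff_prime_int.1 hq).dvd_or_dvd h with h | h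
    · exact (Int.natCast_dvd_natCast.1 h).mul_right n
    · have : (q : ℤ) ∣ n := by simpa using (dvd_add_right (h.pow two_ne_zero)).1 hN
      exact (Int.natCast_dvd_natCast.1 this).mul_left 2
  let I := span {(q : S), ((s.val : ℤ) : S) + ((1 : ℤ) : S) * ω}
  have hI : absNorm I = q :=
    absNorm_span_pair hq (by rwa [norm_add_mul hω hn]) (by rwa [trace_add_mul hω hn])
  have hI0 : I ≠ 0 := fun h => hq.ne_zero (by rw [← hI, h, map_zero])
  exact ⟨⟨I, mem_nonZeroDivisors_iff_ne_zero.2 hI0⟩, hI⟩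

lemma exists_normResidue_absNorm_eq [Fintype ι] (hω : ω ^ 2 = -n) (hn : n = ∏ i, p i)
    (hinj : Function.Injective p) (hp4 : ∀ i, p i % 4 = 1) (v : ι → ZMod 2) :
    ∃ I : (Ideal S)⁰, ∀ i, normResidue (p i) (e i) (absNorm (I : Ideal S)) = v i := by
  have hn0 : 0 < n := hn ▸ Finset.prod_pos fun i _ => (hp i).out.pos
  obtain ⟨q, hqn, hq, hqp, hsq⟩ := exists_prime_gt_aLeg_eq_isSquare hp4 hinj v (2 * n)
  obtain ⟨I, hI⟩ := exists_absNorm_eq_of_isSquare hω hn0 hq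
    (Nat.not_dvd_of_pos_of_lt (by omega) hqn) (by simpa [hn] using hsq)
  exact ⟨I, fun i => by rw [hI, normResidue_of_not_dvd (hqp i).1, (hqp i).2]⟩

end Genus

section Ambiguous

open Ideal

-- The relation is `∏ 𝔭ᵢ = (ω)`, except that for `n = 1` it is `𝔭₂ = (1 + ω)`.
lemma not_injective_involutionHom {S ι : Type*} [CommRing S] [IsDedekindDomain S] [Fintype ι]
    {p : ι → ℕ} {n : ℕ} {ω : S} (hω : ω ^ 2 = -n) (hn : n = ∏ i, p i) {Q : ι ⊕ Unit → (Ideal S)⁰}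
    (hQ : ∀ j, (Q j : Ideal S) ^ 2 = span {(ramifiedPrime p j : S)}) : ¬ Function.Injective
    (involutionHom (fun j => ClassGroup.mk0 (Q j)) fun j => mk0_sq_eq_one (hQ j)) := by
  suffices ∃ Y : ι ⊕ Unit → ZMod 2, Y ≠ 0 ∧ ∏ j, ClassGroup.mk0 (Q j) ^ (Y j).val = 1 by
    obtain ⟨Y, hY, h⟩ := this
    exact fun hinj => hY (hinj (a₁ := .ofAdd Y) (a₂ := 1) (h.trans (map_one _).symm))
  have hprin {I : (Ideal S)⁰} {x : S} (h : (I : Ideal S) ^ 2 = span {x} ^ 2) :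
      ClassGroup.mk0 I = 1 :=
    (ClassGroup.mk0_eq_one_iff I.2).2 ⟨x, pow_left_injective two_ne_zero h⟩
  rcases isEmpty_or_nonempty ι with hι | hι
  · refine ⟨1, one_ne_zero, ?_⟩
    have hω1 : ω ^ 2 = -1 := by simpa [hn] using hω
    have hωu : IsUnit ω := .of_mul_eq_one (-ω) (by linear_combination -hω1)
    have h2 : ClassGroup.mk0 (Q (.inr ())) = 1 := hprin (x := 1 + ω) <| by
      rw [hQ, span_singleton_pow, ← span_singleton_mul_right_unit hωu]
      congr 2
      simp only [ramifiedPrime, Sum.elim_inr]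
      push_cast
      linear_combination -hω1
    simp [h2]
  · refine ⟨Sum.elim 1 0, fun h => ?_, ?_⟩
    · exact one_ne_zero (congrFun h (.inl hι.some))
    · have h : ClassGroup.mk0 (∏ i, Q (.inl i)) = 1 := hprin (x := ω) <| by
        rw [Submonoid.coe_finsetProd, ← Finset.prod_pow]
        simp_rw [hQ]
        rw [prod_span_singleton, span_singleton_pow, hω, hn, span_singleton_neg]
        simp [ramifiedPrime]
      simpa [ZMod.val_one] using h

lemma mem_nonZeroDivisors_of_sq_eq_span_natCast {R : Type*} [CommRing R] [IsDedekindDomain R]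
    [CharZero R] {q : ℕ} (hq : q ≠ 0) {I : Ideal R} (hI : I ^ 2 = span {(q : R)}) :
    I ∈ (Ideal R)⁰ := by
  refine mem_nonZeroDivisors_iff_ne_zero.2 fun h => ?_
  rw [h, zero_pow two_ne_zero, zero_eq_bot, eq_comm, span_singleton_eq_bot, Nat.cast_eq_zero] at hI
  exact hq hI

variable {S : Type*} [CommRing S] [IsDedekindDomain S] [Algebra.IsQuadraticExtension ℤ S]
  {ι : Type*} {p : ι → ℕ} [hp : ∀ i, Fact (p i).Prime] {e : ι → ℤ} {n : ℕ} {ω : S}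

lemma exists_sq_eq_span_ramifiedPrime (hω : ω ^ 2 = -n) (hn4 : n % 4 = 1)
    (hpe : ∀ i, (n : ℤ) = p i * e i) (he : ∀ i, ¬ (p i : ℤ) ∣ e i) (j : ι ⊕ Unit) :
    ∃ I : (Ideal S)⁰, (I : Ideal S) ^ 2 = span {(ramifiedPrime p j : S)} := by
  have := charZero_of_isQuadraticExtension (S := S)
  rcases j with i | -
  · have h := span_pair_sq_of_sq_eq_neg hω (hpe i) (he i)
    exact ⟨⟨_, mem_nonZeroDivisors_of_sq_eq_span_natCast (hp i).out.ne_zero h⟩, h⟩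
  · have h := span_two_sq_of_sq_eq_neg hω hn4
    exact ⟨⟨_, mem_nonZeroDivisors_of_sq_eq_span_natCast two_ne_zero h⟩, h⟩

variable [Fintype ι] (hω : ω ^ 2 = -n) (hn : n = ∏ i, p i) {Q : ι ⊕ Unit → (Ideal S)⁰}
  (hQ : ∀ j, (Q j : Ideal S) ^ 2 = span {(ramifiedPrime p j : S)})
include hω hn

lemma ker_powMonoidHom_two_le_range :
    (powMonoidHom 2 : ClassGroup S →* ClassGroup S).ker ≤
      (involutionHom (fun j => ClassGroup.mk0 (Q j)) fun j => mk0_sq_eq_one (hQ j)).range := by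
  have hn0 : 0 < n := hn ▸ Finset.prod_pos fun i _ => (hp i).out.pos
  refine ker_powMonoidHom_two_le hω hn0 fun q hq hqn => ?_
  obtain ⟨j, rfl⟩ : ∃ j, ramifiedPrime p j = q := by
    rcases hq.dvd_mul.1 hqn with h | h
    · exact ⟨.inr (), ((Nat.prime_dvd_prime_iff_eq hq Nat.prime_two).1 h).symm⟩
    · obtain ⟨i, -, hi⟩ := (hq.prime.dvd_finsetProd_iff _).1 (hn ▸ h)
      exact ⟨.inl i, ((Nat.prime_dvd_prime_iff_eq hq (hp i).out).1 hi).symm⟩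
  exact ⟨Q j, hQ j, mem_range_involutionHom _ j⟩

end Ambiguous

section FourthPowers

open Ideal

variable {S : Type*} [CommRing S] [IsDedekindDomain S] [Algebra.IsQuadraticExtension ℤ S]
  [Finite (ClassGroup S)] {ι : Type*} [Fintype ι] {p : ι → ℕ} [hp : ∀ i, Fact (p i).Prime]
  {e : ι → ℤ} {n : ℕ} {ω : S}

lemma card_ker_powMonoidHom_two_le (hω : ω ^ 2 = -n) (hn : n = ∏ i, p i)
    {Q : ι ⊕ Unit → (Ideal S)⁰}
    (hQ : ∀ j, (Q j : Ideal S) ^ 2 = span {(ramifiedPrime p j : S)}) :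
    Nat.card (powMonoidHom 2 : ClassGroup S →* ClassGroup S).ker ≤
      Nat.card (Multiplicative (ι → ZMod 2)) := by
  have h₁ := Subgroup.card_le_of_le (ker_powMonoidHom_two_le_range hω hn hQ)
  have h₂ := two_mul_card_range_le (not_injective_involutionHom hω hn hQ)
  simp only [Nat.card_congr Multiplicative.toAdd, Nat.card_fun, Nat.card_sum, Nat.card_unique,
    Nat.card_zmod, pow_succ] at h₂ ⊢
  omega

theorem mk0_eq_pow_four_iff (hω : ω ^ 2 = -n) (hn : n = ∏ i, p i) (hinj : Function.Injective p)
    (hp4 : ∀ i, p i % 4 = 1) (hpe : ∀ i, (n : ℤ) = p i * e i) (he : ∀ i, ¬ (p i : ℤ) ∣ e i)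
    {D B : (Ideal S)⁰} (hDB : ClassGroup.mk0 D * ClassGroup.mk0 B ^ 2 = 1) :
    (∃ s, ClassGroup.mk0 D = s ^ 4) ↔ ∃ Y : ι ⊕ Unit → ZMod 2,
      (Matrix.of fun i j => normResidue (p i) (e i) (ramifiedPrime p j)).mulVec Y =
        fun i => normResidue (p i) (e i) (absNorm (B : Ideal S)) := by
  have hn0 : 0 < n := hn ▸ Finset.prod_pos fun i _ => (hp i).out.pos
  have hn4 : n % 4 = 1 := hn ▸ prod_mod_four_eq_one hp4 _
  choose Q hQ using exists_sq_eq_span_ramifiedPrime hω hn4 hpe he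
  have hQnorm (j : ι ⊕ Unit) : absNorm (Q j : Ideal S) = ramifiedPrime p j :=
    absNorm_of_sq_eq_span_natCast (hQ j)
  obtain ⟨G, hG⟩ := exists_genusHom hω hn0 hpe he
  have hGsurj : Function.Surjective G := fun v => by
    obtain ⟨I, hI⟩ := exists_normResidue_absNorm_eq hω hn hinj hp4 v.toAdd
    exact ⟨ClassGroup.mk0 I, (hG I).trans (congrArg _ (funext hI))⟩
  have hker : G.ker = (powMonoidHom 2).range := ker_eq_range_powMonoidHom hGsurj
    (fun v => funext fun i => CharTwo.two_nsmul (v.toAdd i)) (card_ker_powMonoidHom_two_le hω hn hQ)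
  have hrange := (range_involutionHom_le fun j => mk0_sq_eq_one (hQ j)).antisymm
    (ker_powMonoidHom_two_le_range hω hn hQ)
  rw [exists_eq_pow_four_iff hker hrange hDB, Multiplicative.ofAdd.surjective.exists]
  refine exists_congr fun Y => ?_
  rw [← Multiplicative.toAdd.injective.eq_iff, toAdd_map_involutionHom]
  simp only [hG, hQnorm, toAdd_ofAdd]

end FourthPowers

section Conic

lemma dvd_of_sq_dvd_mul_sq {q m x : ℕ} (hq : q.Prime) (hm : Squarefree m)
    (h : q ^ 2 ∣ m * x ^ 2) : q ∣ x := by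
  by_contra hqx
  have hq2 : q ^ 2 ∣ m :=
    (Nat.Coprime.pow 2 2 (hq.coprime_iff_not_dvd.2 hqx)).dvd_of_dvd_mul_right h
  exact hq.not_isUnit (hm q (by rwa [← sq]))

variable {a b c d e r : ℕ}

lemma odd_of_two_pow_mul_sq_eq (hd4 : d % 4 = 1) (he4 : e % 4 = 1)
    (hprim : Nat.gcd a (Nat.gcd b c) = 1) (heq : 2 ^ r * c ^ 2 = d * a ^ 2 + e * b ^ 2) :
    Odd c := by
  by_contra hc
  obtain ⟨c, rfl⟩ := even_iff_two_dvd.1 (Nat.not_odd_iff_even.1 hc)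
  have h4 : (a ^ 2 + b ^ 2) % 4 = 0 := by
    have h : (d * a ^ 2 + e * b ^ 2) % 4 = 0 :=
      heq ▸ Nat.mod_eq_zero_of_dvd ⟨2 ^ r * c ^ 2, by ring⟩
    simpa [Nat.add_mod, Nat.mul_mod, hd4, he4] using h
  have hab : a % 2 = 0 ∧ b % 2 = 0 := by
    rcases Nat.even_or_odd' a with ⟨x, rfl | rfl⟩ <;>
      rcases Nat.even_or_odd' b with ⟨y, rfl | rfl⟩ <;> ring_nf at h4 <;> omega
  have h2 : 2 ∣ Nat.gcd a (Nat.gcd b (2 * c)) := Nat.dvd_gcd (Nat.dvd_of_mod_eq_zero hab.1)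
    (Nat.dvd_gcd (Nat.dvd_of_mod_eq_zero hab.2) (Dvd.intro _ rfl))
  omega

lemma coprime_mul_of_two_pow_mul_sq_eq (hde : Squarefree (d * e))
    (hprim : Nat.gcd a (Nat.gcd b c) = 1) (heq : 2 ^ r * c ^ 2 = d * a ^ 2 + e * b ^ 2) :
    c.Coprime (d * a) := by
  obtain ⟨hcop, hd, he⟩ := Nat.squarefree_mul_iff.1 hde
  refine Nat.coprime_of_dvd fun q hq hqc hqda => ?_
  have hq2 : q ^ 2 ∣ d * a ^ 2 + e * b ^ 2 := heq ▸ (pow_dvd_pow_of_dvd hqc 2).mul_left _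
  have hab : q ∣ a ∧ q ∣ b := by
    rcases hq.dvd_mul.1 hqda with hqd | hqa
    · have hqe : ¬ q ∣ e := fun h => hq.not_dvd_one (hcop ▸ Nat.dvd_gcd hqd h)
      have hqeb : q ∣ e * b ^ 2 :=
        (Nat.dvd_add_right (hqd.mul_right _)).1 ((dvd_pow_self q two_ne_zero).trans hq2)
      have hqb := hq.dvd_of_dvd_pow ((hq.dvd_mul.1 hqeb).resolve_left hqe)
      exact ⟨dvd_of_sq_dvd_mul_sq hq hd
        ((Nat.dvd_add_left ((pow_dvd_pow_of_dvd hqb 2).mul_left e)).1 hq2), hqb⟩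
    · exact ⟨hqa, dvd_of_sq_dvd_mul_sq hq he
        ((Nat.dvd_add_right ((pow_dvd_pow_of_dvd hqa 2).mul_left d)).1 hq2)⟩
  exact hq.not_dvd_one (hprim ▸ Nat.dvd_gcd hab.1 (Nat.dvd_gcd hab.2 hqc))

lemma coprime_of_two_pow_mul_sq_eq (hde : Squarefree (d * e))
    (hprim : Nat.gcd a (Nat.gcd b c) = 1) (heq : 2 ^ r * c ^ 2 = d * a ^ 2 + e * b ^ 2) :
    c.Coprime (d * e) :=
  (coprime_mul_of_two_pow_mul_sq_eq hde hprim heq).coprime_mul_right_right.mul_right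
    (coprime_mul_of_two_pow_mul_sq_eq (mul_comm d e ▸ hde) (Nat.gcd_left_comm a b c ▸ hprim)
      (heq.trans (add_comm _ _))).coprime_mul_right_right

end Conic

section Decomposition

open Ideal

variable {S : Type*} [CommRing S] [IsDedekindDomain S] [Algebra.IsQuadraticExtension ℤ S]
  {n : ℕ} {ω : S}

lemma prod_span_pair_mul_pow_sq {ι : Type*} [Fintype ι] {p : ι → ℕ} [hp : ∀ i, Fact (p i).Prime]
    (hω : ω ^ 2 = -n) (hn : n = ∏ i, p i) (hinj : Function.Injective p) (hp4 : ∀ i, p i % 4 = 1)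
    {d : ℕ} (hd : d ∣ n) {P : Ideal S} [P.IsPrime] (hP : (2 : S) ∈ P) (r : ℕ) :
    ((∏ i with p i ∣ d, span {(p i : S), ω}) * P ^ r) ^ 2 = span {((2 ^ r * d : ℕ) : S)} := by
  obtain ⟨e, he⟩ := exists_forall_eq_mul_not_dvd hinj
  have hP2 : P ^ 2 = span {((2 : ℕ) : S)} := sq_eq_span_of_isPrime Nat.prime_two
    (span_two_sq_of_sq_eq_neg hω (mod_four_eq_one_of_dvd_prod hinj hp4 hn.dvd)) hP
  have hQ (i : ι) : span {(p i : S), ω} ^ 2 = span {(p i : S)} :=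
    span_pair_sq_of_sq_eq_neg hω (hn ▸ (he i).1) (he i).2
  rw [mul_pow, ← pow_mul, mul_comm r, pow_mul, hP2, ← Finset.prod_pow,
    Finset.prod_congr rfl fun i _ => hQ i, prod_span_singleton, span_singleton_pow,
    span_singleton_mul_span_singleton, ← Nat.cast_prod, prod_filter_dvd hinj (hn ▸ hd), mul_comm]
  push_cast
  rfl

-- `u + vω` has norm `Mc²` and trace `2u` prime to `c`, so it generates `DB²` with `N B = c`.
lemma exists_absNorm_eq_and_mk0_mul_sq_eq_one (hω : ω ^ 2 = -n) (hn : 0 < n) {D : (Ideal S)⁰}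
    {M c : ℕ} (hD : (D : Ideal S) ^ 2 = span {(M : S)}) (hM : M ≠ 0) (hc : c ≠ 0) {u v : ℤ}
    (huv : u ^ 2 + n * v ^ 2 = M * c ^ 2) (hMu : (M : ℤ) ∣ 2 * u)
    (hcu : IsCoprime (c : ℤ) (2 * u)) :
    ∃ B : (Ideal S)⁰, absNorm (B : Ideal S) = c ∧ ClassGroup.mk0 D * ClassGroup.mk0 B ^ 2 = 1 := by
  obtain ⟨B, hB, hDB⟩ := exists_mul_sq_eq_span_singleton (α := (u : S) + v * ω) hD hM
    (by rwa [norm_add_mul hω hn]) (by rwa [trace_add_mul hω hn]) (by rwa [trace_add_mul hω hn])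
  have hB0 : B ≠ 0 := fun h => hc (by rw [← hB, h, map_zero])
  refine ⟨⟨B, mem_nonZeroDivisors_iff_ne_zero.2 hB0⟩, hB, ?_⟩
  rw [← map_pow, ← map_mul, ClassGroup.mk0_eq_one_iff]
  exact ⟨_, hDB⟩

lemma exists_absNorm_eq_of_two_pow_mul_sq_eq {d f r a b c : ℕ} (hω : ω ^ 2 = -(d * f : ℕ))
    (hsq : Squarefree (d * f)) (hd4 : d % 4 = 1) (hf4 : f % 4 = 1) (hr : r ≤ 1)
    (hprim : Nat.gcd a (Nat.gcd b c) = 1) (heq : 2 ^ r * c ^ 2 = d * a ^ 2 + f * b ^ 2)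
    {D : (Ideal S)⁰} (hD : (D : Ideal S) ^ 2 = span {((2 ^ r * d : ℕ) : S)}) :
    ∃ B : (Ideal S)⁰, absNorm (B : Ideal S) = c ∧ ClassGroup.mk0 D * ClassGroup.mk0 B ^ 2 = 1 := by
  have hc : Odd c := odd_of_two_pow_mul_sq_eq hd4 hf4 hprim heq
  have hcda : c.Coprime (2 * (d * a)) := (Nat.coprime_two_right.2 hc).mul_right
    (coprime_mul_of_two_pow_mul_sq_eq hsq hprim heq)
  have hd0 : d ≠ 0 := left_ne_zero_of_mul hsq.ne_zero
  refine exists_absNorm_eq_and_mk0_mul_sq_eq_one (u := (d * a : ℕ)) (v := b) hω hsq.ne_zero.pos hD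
    (by positivity) hc.pos.ne' ?_ ?_ ?_
  · have := congrArg (Nat.cast : ℕ → ℤ) heq
    push_cast at this ⊢
    linear_combination -d * this
  · have h2 : 2 ^ r * d ∣ 2 * (d * a) :=
      mul_assoc 2 d a ▸ (mul_dvd_mul_right (pow_dvd_pow 2 hr) d).mul_right a
    exact_mod_cast h2
  · exact_mod_cast Nat.isCoprime_iff_coprime.2 hcda

end Decomposition

/-- with `𝔡` the product of the ramified primes over the prime divisors of `d`
times the `r`-th power of the ramified prime over `2`, the ideal class `[𝔡]` lies in `4A`
iff `C = ([c/p₁], …, [c/p_k])ᵀ` lies in the column image of the Rédei matrix `R`. -/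
theorem stmt_9 (k : ℕ) (p : Fin k → ℕ) (hp : ∀ i, (p i).Prime)
    (hinj : Function.Injective p)
    (n : ℕ) (hn : n = ∏ i, p i) (hp4 : ∀ i, p i % 4 = 1)
    (K : Type) [Field K] [NumberField K] (hdeg : Module.finrank ℚ K = 2)
    (ω : 𝓞 K) (hω : (ω : K) ^ 2 = -(n : K))
    (d : ℕ) (hd : d ∣ n) (r : ℕ) (hr : r = 0 ∨ r = 1)
    (hnorm : ∃ x : K, x ≠ 0 ∧ Algebra.norm ℚ x = ((2 ^ r * d : ℕ) : ℚ))
    (hnt1 : 2 ^ r * d ≠ 1) (hntn : 2 ^ r * d ≠ n)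
    (a b c : ℕ) (ha : 0 < a) (hb : 0 < b) (hc : 0 < c)
    (hprim : Nat.gcd a (Nat.gcd b c) = 1)
    (heq : 2 ^ r * c ^ 2 = d * a ^ 2 + (n / d) * b ^ 2)
    (P₂ : Ideal (𝓞 K)) (hP₂prime : P₂.IsPrime) (hP₂two : (2 : 𝓞 K) ∈ P₂) (hP₂bot : P₂ ≠ ⊥)
    (𝔡 : Ideal (𝓞 K))
    (h𝔡 : 𝔡 = (∏ i ∈ Finset.univ.filter (fun i => p i ∣ d),
        Ideal.span {((p i : ℕ) : 𝓞 K), ω}) * P₂ ^ r) :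
    ∀ hmem : 𝔡 ∈ (Ideal (𝓞 K))⁰,
      ((∃ cls : ClassGroup (𝓞 K), ClassGroup.mk0 ⟨𝔡, hmem⟩ = cls ^ 4) ↔
        ∃ Y : (Fin k ⊕ Unit) → ZMod 2,
          (redeiOfN n k p).mulVec Y = fun i => aLeg (c : ℤ) (p i)) := by
  intro hmem
  have (i : Fin k) : Fact (p i).Prime := ⟨hp i⟩
  have : Algebra.IsQuadraticExtension ℤ (𝓞 K) := ⟨(RingOfIntegers.rank K).trans hdeg⟩
  have hω' : ω ^ 2 = -(n : 𝓞 K) := RingOfIntegers.ext (by simpa using hω)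
  have hD := h𝔡 ▸ prod_span_pair_mul_pow_sq hω' hn hinj hp4 hd hP₂two r
  obtain ⟨e, he⟩ : ∃ e : Fin k → ℤ, ∀ i, (n : ℤ) = p i * e i ∧ ¬ (p i : ℤ) ∣ e i :=
    hn ▸ exists_forall_eq_mul_not_dvd hinj
  obtain ⟨f, rfl⟩ := hd
  have hsq : Squarefree (d * f) := hn ▸ squarefree_prod_of_injective hinj
  rw [Nat.mul_div_cancel_left f (left_ne_zero_of_mul hsq.ne_zero).pos] at heq
  obtain ⟨B, rfl, hDB⟩ := exists_absNorm_eq_of_two_pow_mul_sq_eq (D := ⟨𝔡, hmem⟩) hω' hsq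
    (mod_four_eq_one_of_dvd_prod hinj hp4 (hn ▸ Dvd.intro f rfl))
    (mod_four_eq_one_of_dvd_prod hinj hp4 (hn ▸ Dvd.intro_left d rfl)) (by omega) hprim heq hD
  have hR : redeiOfN (d * f) k p = .of fun i j => normResidue (p i) (e i) (ramifiedPrime p j) :=
    Matrix.ext fun i j => redeiOfN_apply hinj hp4 (fun i => (he i).1) (fun i => (he i).2) i j
  have hpc (i : Fin k) : ¬ p i ∣ Ideal.absNorm (B : Ideal (𝓞 K)) := fun h =>
    (hp i).not_dvd_one ((coprime_of_two_pow_mul_sq_eq hsq hprim heq) ▸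
      Nat.dvd_gcd h (hn ▸ Finset.dvd_prod_of_mem p (Finset.mem_univ i)))
  rw [mk0_eq_pow_four_iff hω' hn hinj hp4 (fun i => (he i).1) (fun i => (he i).2) hDB, hR]
  simp only [normResidue_of_not_dvd (hpc _)]
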